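/- Let d ≥ 2 and let h_* be the critical level for level-set percolation of the Gaussian free field on the (d+1)-regular tree (characterized by λ_{h_*} = 1), and u_* the critical level for vacant-set percolation of random interlacements, given by d·exp(−u_*(d−1)²/d) = 1. Then 0 ≤ h_Δ < h_* ≤ h_□ < √(2u_*), where h_Δ and h_□ are defined by d·Φ̄(h_Δ(d−1)/√d) = 1 and λ_0·exp(−h_□²(d−1)²/(2d)) = 1. In particular 0 < h_* < √(2u_*). -/

import Mathlib

open MeasureTheory ProbabilityTheory
namespace OrnsteinUhlenbeck

open scoped ENNReal NNReal

/-- The stationary law `N(0, d / (d² - 1))`. -/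
noncomputable abbrev stationary (d : ℕ) : Measure ℝ :=
  gaussianReal 0 (Real.toNNReal ((d : ℝ) / ((d : ℝ) ^ 2 - 1)))

/-- The transition law `N(a / d, 1 / d)` started at `a`. -/
noncomputable def transition (d : ℕ) (a : ℝ) : Measure ℝ :=
  gaussianReal (a / d) (d : ℝ≥0)⁻¹

instance (d : ℕ) (a : ℝ) : IsProbabilityMeasure (transition d a) := by
  unfold transition; infer_instance

lemma stationary_var_pos {d : ℕ} (hd : 2 ≤ d) : 0 < (d : ℝ) / ((d : ℝ) ^ 2 - 1) := by
  have : (2 : ℝ) ≤ d := by exact_mod_cast hd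
  apply div_pos <;> nlinarith

lemma stationary_var_ne_zero {d : ℕ} (hd : 2 ≤ d) :
    Real.toNNReal ((d : ℝ) / ((d : ℝ) ^ 2 - 1)) ≠ 0 := by
  simpa using stationary_var_pos hd

lemma transition_var_ne_zero {d : ℕ} (hd : 2 ≤ d) : (d : ℝ≥0)⁻¹ ≠ 0 := by
  simp; omega

lemma transition_absolutelyContinuous {d : ℕ} (hd : 2 ≤ d) (a : ℝ) :
    transition d a ≪ stationary d :=
  (gaussianReal_absolutelyContinuous _ (transition_var_ne_zero hd)).trans
    (gaussianReal_absolutelyContinuous' _ (stationary_var_ne_zero hd))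

lemma measurable_transition (d : ℕ) : Measurable (transition d) := by
  have := measurable_gaussianReal.comp
    (Measurable.prodMk (measurable_id.div_const (d : ℝ)) (measurable_const (a := (d : ℝ≥0)⁻¹)))
  exact this

lemma measurable_lintegral_transition (d : ℕ) {u : ℝ → ℝ≥0∞} (hu : Measurable u) :
    Measurable fun a => ∫⁻ y, u y ∂transition d a :=
  (Measure.measurable_lintegral hu).comp (measurable_transition d)

lemma map_stationary {d : ℕ} (hd : 2 ≤ d) (a : ℝ) :
    (stationary d).map (fun y => a / d + Real.sqrt (1 - 1 / (d : ℝ) ^ 2) * y) =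
      transition d a := by
  have h2 : (2 : ℝ) ≤ d := by exact_mod_cast hd
  have h1 : (fun y => a / d + Real.sqrt (1 - 1 / (d : ℝ) ^ 2) * y) =
      (fun y => a / d + y) ∘ (fun y => Real.sqrt (1 - 1 / (d : ℝ) ^ 2) * y) := rfl
  rw [h1, ← Measure.map_map (by fun_prop) (by fun_prop), gaussianReal_map_const_mul,
    gaussianReal_map_const_add, transition]
  congr 1
  · simp
  · ext
    have h3 : (0 : ℝ) ≤ 1 - 1 / (d : ℝ) ^ 2 := by
      rw [sub_nonneg, div_le_one (by positivity)]; nlinarith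
    have h4 : (d : ℝ) ^ 2 - 1 ≠ 0 := by nlinarith
    simp only [NNReal.coe_mul, NNReal.coe_mk, Real.sq_sqrt h3, NNReal.coe_inv, NNReal.coe_natCast,
      Real.coe_toNNReal _ (stationary_var_pos hd).le]
    field_simp

lemma lintegral_gaussianReal {m : ℝ} {v : ℝ≥0} (hv : v ≠ 0) {u : ℝ → ℝ≥0∞} (hu : Measurable u) :
    ∫⁻ y, u y ∂gaussianReal m v = ∫⁻ y, gaussianPDF m v y * u y := by
  rw [gaussianReal_of_var_ne_zero _ hv,
    lintegral_withDensity_eq_lintegral_mul _ (measurable_gaussianPDF _ _) hu]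
  rfl

lemma setLIntegral_gaussianReal_Ici {m : ℝ} {v : ℝ≥0} (hv : v ≠ 0) {u : ℝ → ℝ≥0∞}
    (hu : Measurable u) (h : ℝ) :
    ∫⁻ y in Set.Ici h, u y ∂gaussianReal m v =
      ∫⁻ y in Set.Ici 0, gaussianPDF m v (y + h) * u (y + h) := by
  rw [← lintegral_indicator measurableSet_Ici, ← lintegral_indicator measurableSet_Ici,
    lintegral_gaussianReal hv (hu.indicator measurableSet_Ici), ← lintegral_add_right_eq_self _ h]
  refine lintegral_congr fun y => ?_
  by_cases hy : 0 ≤ y <;> simp [Set.indicator, hy]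

lemma gaussianPDFReal_symm {d : ℕ} (hd : 2 ≤ d) (a y : ℝ) :
    gaussianPDFReal 0 (Real.toNNReal ((d : ℝ) / ((d : ℝ) ^ 2 - 1))) a *
        gaussianPDFReal (a / d) (d : ℝ≥0)⁻¹ y =
      gaussianPDFReal 0 (Real.toNNReal ((d : ℝ) / ((d : ℝ) ^ 2 - 1))) y *
        gaussianPDFReal (y / d) (d : ℝ≥0)⁻¹ a := by
  have h2 : (2 : ℝ) ≤ d := by exact_mod_cast hd
  have h4 : (d : ℝ) ^ 2 - 1 ≠ 0 := by nlinarith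
  simp only [gaussianPDFReal, Real.coe_toNNReal _ (stationary_var_pos hd).le, NNReal.coe_inv,
    NNReal.coe_natCast]
  rw [mul_mul_mul_comm _ _ _ (Real.exp (-(y - a / d) ^ 2 / (2 * (d : ℝ)⁻¹))),
    mul_mul_mul_comm _ _ _ (Real.exp (-(a - y / d) ^ 2 / (2 * (d : ℝ)⁻¹))),
    ← Real.exp_add, ← Real.exp_add]
  congr 2
  field_simp
  ring

lemma lintegral_mul_lintegral_transition {d : ℕ} (hd : 2 ≤ d) {u v : ℝ → ℝ≥0∞}
    (hu : Measurable u) (hv : Measurable v) :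
    ∫⁻ a, u a * ∫⁻ y, v y ∂transition d a ∂stationary d =
      ∫⁻ a, v a * ∫⁻ y, u y ∂transition d a ∂stationary d := by
  have key : ∀ {u v : ℝ → ℝ≥0∞}, Measurable u → Measurable v →
      ∫⁻ a, u a * ∫⁻ y, v y ∂transition d a ∂stationary d =
        ∫⁻ a, ∫⁻ y, ENNReal.ofReal (gaussianPDFReal 0
          (Real.toNNReal ((d : ℝ) / ((d : ℝ) ^ 2 - 1))) a *
            gaussianPDFReal (a / d) (d : ℝ≥0)⁻¹ y) * (u a * v y) := by
    intro u v hu hv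
    rw [lintegral_gaussianReal (stationary_var_ne_zero hd)
      (u := fun a => u a * ∫⁻ y, v y ∂transition d a)
      (hu.mul (measurable_lintegral_transition d hv))]
    refine lintegral_congr fun a => ?_
    rw [transition, lintegral_gaussianReal (transition_var_ne_zero hd) hv, ← mul_assoc,
      ← lintegral_const_mul (f := fun y => gaussianPDF (a / d) (d : ℝ≥0)⁻¹ y * v y) _
        ((measurable_gaussianPDF _ _).mul hv)]
    refine lintegral_congr fun y => ?_
    rw [ENNReal.ofReal_mul (gaussianPDFReal_nonneg _ _ _)]
    simp only [gaussianPDF]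
    ring
  have hm : Measurable (fun p : ℝ × ℝ => gaussianPDFReal (p.1 / d) (d : ℝ≥0)⁻¹ p.2) :=
    measurable_uncurry_gaussianPDFReal.comp
      ((measurable_fst.div_const (d : ℝ)).prodMk (measurable_const.prodMk measurable_snd))
  rw [key hu hv, key hv hu, lintegral_lintegral_swap]
  · refine lintegral_congr fun y => lintegral_congr fun a => ?_
    rw [gaussianPDFReal_symm hd, mul_comm (u a)]
  · refine Measurable.aemeasurable ?_
    simp only [Function.uncurry_def]
    refine (ENNReal.measurable_ofReal.comp
      (((measurable_gaussianPDFReal _ _).comp measurable_fst).mul hm)).mul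
      ((hu.comp measurable_fst).mul (hv.comp measurable_snd))

lemma sq_lintegral_le {α : Type*} [MeasurableSpace α] {μ : Measure α} {f w : α → ℝ≥0∞}
    (hf : Measurable f) (hw : Measurable w) (hw0 : ∀ x, w x ≠ 0) (hwt : ∀ x, w x ≠ ∞) :
    (∫⁻ x, f x ∂μ) ^ 2 ≤ (∫⁻ x, f x ^ 2 / w x ∂μ) * ∫⁻ x, w x ∂μ := by
  have h2 : Real.HolderConjugate 2 2 := by
    rw [Real.holderConjugate_iff]; norm_num
  have key := ENNReal.lintegral_mul_le_Lp_mul_Lq μ h2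
    (f := fun x => f x / w x ^ (1 / 2 : ℝ)) (g := fun x => w x ^ (1 / 2 : ℝ))
    (hf.div (hw.pow_const _)).aemeasurable (hw.pow_const _).aemeasurable
  have e1 : ∀ x, w x ^ (1 / 2 : ℝ) ≠ 0 := fun x => by
    simp [ENNReal.rpow_eq_zero_iff, hw0, hwt]
  have e2 : ∀ x, w x ^ (1 / 2 : ℝ) ≠ ∞ := fun x => by
    simp [ENNReal.rpow_eq_top_iff, hw0, hwt]
  have e3 : ∀ x, (w x ^ (1 / 2 : ℝ)) ^ (2 : ℝ) = w x := fun x => by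
    rw [← ENNReal.rpow_mul]; norm_num
  simp only [Pi.mul_apply, ENNReal.div_mul_cancel (e1 _) (e2 _), e3,
    ENNReal.div_rpow_of_nonneg _ _ (zero_le_two : (0 : ℝ) ≤ 2)] at key
  calc (∫⁻ x, f x ∂μ) ^ 2
      ≤ ((∫⁻ x, f x ^ (2 : ℝ) / w x ∂μ) ^ (1 / 2 : ℝ) * (∫⁻ x, w x ∂μ) ^ (1 / 2 : ℝ)) ^ 2 := by
        gcongr
    _ = _ := by
        rw [mul_pow, ← ENNReal.rpow_two, ← ENNReal.rpow_two, ← ENNReal.rpow_mul,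
          ← ENNReal.rpow_mul]
        norm_num

/-- Schur test for the transition operator compressed to `S`. -/
lemma schur_test {d : ℕ} (hd : 2 ≤ d) {S : Set ℝ} (hS : MeasurableSet S) {w F : ℝ → ℝ≥0∞}
    {c : ℝ≥0∞} (hw : Measurable w) (hw0 : ∀ x, w x ≠ 0) (hwt : ∀ x, w x ≠ ∞)
    (hc : ∀ a ∈ S, ∫⁻ y in S, w y ∂transition d a ≤ c * w a) (hF : Measurable F) :
    ∫⁻ a in S, (∫⁻ y in S, F y ∂transition d a) ^ 2 ∂stationary d ≤
      c ^ 2 * ∫⁻ a in S, F a ^ 2 ∂stationary d := by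
  have hG : Measurable fun y => F y ^ 2 / w y := (hF.pow_const 2).div hw
  have hmW : Measurable fun a => ∫⁻ y in S, w y ∂transition d a := by
    simp_rw [← lintegral_indicator hS]
    exact measurable_lintegral_transition d (hw.indicator hS)
  calc ∫⁻ a in S, (∫⁻ y in S, F y ∂transition d a) ^ 2 ∂stationary d
      ≤ ∫⁻ a in S, c * (w a * ∫⁻ y in S, F y ^ 2 / w y ∂transition d a) ∂stationary d := by
        refine setLIntegral_mono' hS fun a ha => (sq_lintegral_le hF hw hw0 hwt).trans ?_
        rw [← mul_assoc, mul_comm]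
        gcongr
        exact hc a ha
    _ = c * ∫⁻ a, S.indicator w a *
          ∫⁻ y, S.indicator (fun y => F y ^ 2 / w y) y ∂transition d a ∂stationary d := by
        simp_rw [lintegral_indicator hS]
        rw [lintegral_const_mul, ← lintegral_indicator hS]
        · congr 1
          refine lintegral_congr fun a => ?_
          by_cases ha : a ∈ S <;> simp [ha]
        · refine hw.mul ?_
          simp_rw [← lintegral_indicator hS]
          exact measurable_lintegral_transition d (hG.indicator hS)
    _ = c * ∫⁻ a in S, F a ^ 2 / w a * ∫⁻ y in S, w y ∂transition d a ∂stationary d := by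
        rw [lintegral_mul_lintegral_transition hd (hw.indicator hS) (hG.indicator hS)]
        simp_rw [lintegral_indicator hS]
        rw [← lintegral_indicator hS]
        congr 1
        refine lintegral_congr fun a => ?_
        by_cases ha : a ∈ S <;> simp [ha]
    _ ≤ c * ∫⁻ a in S, c * F a ^ 2 ∂stationary d := by
        gcongr c * ?_
        refine setLIntegral_mono' hS fun a ha => ?_
        calc F a ^ 2 / w a * ∫⁻ y in S, w y ∂transition d a
            ≤ F a ^ 2 / w a * (c * w a) := by gcongr; exact hc a ha
          _ = c * (F a ^ 2 / w a * w a) := by ring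
          _ = c * F a ^ 2 := by rw [ENNReal.div_mul_cancel (hw0 a) (hwt a)]
    _ = c ^ 2 * ∫⁻ a in S, F a ^ 2 ∂stationary d := by
        rw [lintegral_const_mul _ (hF.pow_const 2)]; ring

lemma transition_apply {d : ℕ} (a : ℝ) {s : Set ℝ} (hs : MeasurableSet s) :
    transition d a s = gaussianReal 0 (d : ℝ≥0)⁻¹ ((fun y => a / d + y) ⁻¹' s) := by
  rw [transition, ← Measure.map_apply (by fun_prop) hs, gaussianReal_map_const_add, zero_add]

lemma gaussianReal_Ici_strictAnti (m : ℝ) {v : ℝ≥0} (hv : v ≠ 0) :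
    StrictAnti fun t => gaussianReal m v (Set.Ici t) := by
  intro s t hst
  have hd : Disjoint (Set.Ico s t) (Set.Ici t) :=
    Set.disjoint_left.2 fun x hx hx' => not_lt.2 hx' hx.2
  have h0 : gaussianReal m v (Set.Ico s t) ≠ 0 := by
    intro h
    have := gaussianReal_absolutelyContinuous' m hv h
    simp at this
    linarith
  simp only
  rw [← Set.Ico_union_Ici_eq_Ici hst.le, measure_union hd measurableSet_Ici, add_comm]
  exact ENNReal.lt_add_right (measure_ne_top _ _) h0

lemma transition_Ici_strictMono {d : ℕ} (hd : 2 ≤ d) (h : ℝ) :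
    StrictMono fun a => transition d a (Set.Ici h) := by
  intro a b hab
  have h0 : (0 : ℝ) < d := by positivity
  have e : ∀ a : ℝ, (fun y => a / d + y) ⁻¹' Set.Ici h = Set.Ici (h - a / d) := fun a => by
    ext y; simp only [Set.mem_preimage, Set.mem_Ici]; constructor <;> intro <;> linarith
  simp only [transition_apply _ measurableSet_Ici, e]
  apply gaussianReal_Ici_strictAnti 0 (transition_var_ne_zero hd)
  have := div_lt_div_of_pos_right hab h0
  linarith

lemma transition_Ici_self {d : ℕ} (hd : 2 ≤ d) (h : ℝ) :
    transition d h (Set.Ici h) =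
      gaussianReal 0 1 (Set.Ici (h * ((d : ℝ) - 1) / Real.sqrt d)) := by
  have h0 : (0 : ℝ) < d := by positivity
  have hs : 0 < Real.sqrt d := Real.sqrt_pos.2 h0
  have e1 : (d : ℝ≥0)⁻¹ = NNReal.mk ((Real.sqrt d)⁻¹ ^ 2) (sq_nonneg _) * 1 := by
    ext
    simp only [NNReal.coe_inv, NNReal.coe_natCast, mul_one, NNReal.coe_mk, inv_pow,
      Real.sq_sqrt h0.le]
  have e2 : gaussianReal 0 (d : ℝ≥0)⁻¹ =
      (gaussianReal 0 1).map (fun x => (Real.sqrt d)⁻¹ * x) := by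
    rw [gaussianReal_map_const_mul, mul_zero, e1]
  rw [transition_apply _ measurableSet_Ici, e2, Measure.map_apply (by fun_prop)
    (measurableSet_Ici.preimage (by fun_prop))]
  congr 1
  ext x
  simp only [Set.mem_preimage, Set.mem_Ici]
  have hsq : Real.sqrt d * Real.sqrt d = d := Real.mul_self_sqrt h0.le
  have e3 : h * ((d : ℝ) - 1) / Real.sqrt d = Real.sqrt d * (h - h / d) := by
    rw [div_eq_iff hs.ne', mul_right_comm, hsq]; field_simp
  rw [e3, inv_mul_eq_div, ← sub_le_iff_le_add', le_div_iff₀ hs, mul_comm]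

lemma real_gaussianReal_Ici (t : ℝ) :
    (Real.sqrt (2 * Real.pi))⁻¹ * ∫ x in Set.Ioi t, Real.exp (-x ^ 2 / 2) =
      (gaussianReal 0 1).real (Set.Ici t) := by
  rw [Measure.real, gaussianReal_apply_eq_integral _ one_ne_zero, ENNReal.toReal_ofReal
    (integral_nonneg fun x => gaussianPDFReal_nonneg _ _ _), integral_Ici_eq_integral_Ioi,
    ← integral_const_mul]
  simp [gaussianPDFReal]

lemma lintegral_one_add_sq_transition (d : ℕ) (a : ℝ) {ε : ℝ} (hε : 0 ≤ ε) :
    ∫⁻ y, ENNReal.ofReal (1 + ε * y ^ 2) ∂transition d a =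
      ENNReal.ofReal (1 + ε * ((d : ℝ)⁻¹ + (a / d) ^ 2)) := by
  have hL : MemLp id 2 (transition d a) := memLp_id_gaussianReal 2
  have hi : Integrable (fun y : ℝ => y ^ 2) (transition d a) := hL.integrable_sq
  have hv := variance_eq_sub hL
  have h1 : Var[id; transition d a] = (d : ℝ)⁻¹ := by
    simp [transition, variance_id_gaussianReal]
  have h2 : ∫ y, y ∂transition d a = a / d := by simp [transition, integral_id_gaussianReal]
  have h3 : ∫ y, y ^ 2 ∂transition d a = (d : ℝ)⁻¹ + (a / d) ^ 2 := by
    rw [h1] at hv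
    simp only [Pi.pow_apply, id_eq, h2] at hv
    linarith
  rw [← ofReal_integral_eq_lintegral_ofReal]
  · congr 1
    rw [integral_add (integrable_const _) (hi.const_mul _), integral_const_mul, h3]
    simp
  · exact (integrable_const _).add (hi.const_mul _)
  · exact Filter.Eventually.of_forall fun y => by positivity

/-- A Lyapunov weight showing that the transition operator compressed to the half-line
is a strict contraction. -/
lemma exists_lyapunov_weight {d : ℕ} (hd : 2 ≤ d) :
    ∃ w : ℝ → ℝ≥0∞, ∃ c : ℝ, Measurable w ∧ (∀ x, w x ≠ 0) ∧ (∀ x, w x ≠ ∞) ∧ 0 ≤ c ∧ c < 1 ∧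
      ∀ a ∈ Set.Ici (0 : ℝ),
        ∫⁻ y in Set.Ici 0, w y ∂transition d a ≤ ENNReal.ofReal c * w a := by
  have h2 : (2 : ℝ) ≤ d := by exact_mod_cast hd
  have h0 : (0 : ℝ) < d := by positivity
  have e : ∀ a : ℝ, (fun y => a / d + y) ⁻¹' Set.Iio 0 = Set.Iio (-(a / d)) := fun a => by
    ext y; simp only [Set.mem_preimage, Set.mem_Iio]; constructor <;> intro <;> linarith
  set p : ℝ → ℝ := fun a => (transition d a).real (Set.Iio 0) with hp
  have hp2 : 0 < p 2 := by
    refine ENNReal.toReal_pos ?_ (measure_ne_top _ _)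
    intro h
    have := gaussianReal_absolutelyContinuous' _ (transition_var_ne_zero hd) h
    simp at this
  have hp1 : p 2 ≤ 1 := measureReal_le_one
  have hpa : ∀ a ≤ 2, p 2 ≤ p a := by
    intro a ha
    refine ENNReal.toReal_mono (measure_ne_top _ _) ?_
    rw [transition_apply _ measurableSet_Iio, transition_apply _ measurableSet_Iio, e, e]
    refine measure_mono (Set.Iio_subset_Iio ?_)
    have := div_le_div_of_nonneg_right ha h0.le
    linarith
  set q := p 2 with hq
  set ε := q / 3 with hε
  have hε0 : 0 < ε := by positivity
  refine ⟨fun x => ENNReal.ofReal (1 + ε * x ^ 2), 1 - q / 16, by fun_prop, ?_, by simp,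
    by linarith, by linarith, ?_⟩
  · intro x
    rw [Ne, ENNReal.ofReal_eq_zero, not_le]; positivity
  intro a ha
  have ha : 0 ≤ a := ha
  have hsum : ∫⁻ y in Set.Ici 0, ENNReal.ofReal (1 + ε * y ^ 2) ∂transition d a +
      ENNReal.ofReal (p a) ≤ ENNReal.ofReal (1 + ε * ((d : ℝ)⁻¹ + (a / d) ^ 2)) := by
    rw [← lintegral_one_add_sq_transition d a hε0.le,
      ← lintegral_add_compl (μ := transition d a) _ (measurableSet_Ici (a := (0 : ℝ))),
      Set.compl_Ici]
    refine add_le_add le_rfl ?_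
    simp only [hp]
    rw [ofReal_measureReal, ← setLIntegral_one]
    refine lintegral_mono fun y => ?_
    change (1 : ℝ≥0∞) ≤ _
    rw [ENNReal.one_le_ofReal]
    nlinarith [mul_nonneg hε0.le (sq_nonneg y)]
  have hle := ENNReal.le_sub_of_add_le_right ENNReal.ofReal_ne_top hsum
  rw [← ENNReal.ofReal_sub _ measureReal_nonneg] at hle
  refine hle.trans ?_
  rw [← ENNReal.ofReal_mul (by linarith)]
  apply ENNReal.ofReal_le_ofReal
  have hd1 : (d : ℝ)⁻¹ ≤ 1 / 2 := by
    rw [one_div]; exact inv_anti₀ two_pos h2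
  have hd2 : (a / d) ^ 2 ≤ a ^ 2 / 4 := by
    have : a / d ≤ a / 2 := div_le_div_of_nonneg_left ha two_pos h2
    have h3 : 0 ≤ a / d := by positivity
    nlinarith
  have hb : ε * ((d : ℝ)⁻¹ + (a / d) ^ 2) ≤ ε * (1 / 2 + a ^ 2 / 4) := by gcongr
  have hpn : 0 ≤ p a := measureReal_nonneg
  rcases le_total a 2 with h | h
  · have := hpa a h
    have ha2 : a ^ 2 ≤ 4 := by nlinarith
    have h5 : 0 ≤ ε * a ^ 2 := by positivity
    have h6 : ε * a ^ 2 ≤ ε * 4 := by gcongr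
    nlinarith
  · have ha2 : 4 ≤ a ^ 2 := by nlinarith
    have h6 : ε * 4 ≤ ε * a ^ 2 := by gcongr
    nlinarith

lemma enorm_sq_Lp {α : Type*} [MeasurableSpace α] {μ : Measure α} (f : Lp ℝ 2 μ) :
    ‖f‖ₑ ^ 2 = ∫⁻ x, ‖f x‖ₑ ^ 2 ∂μ := by
  have := eLpNorm_nnreal_pow_eq_lintegral (f := f) (μ := μ) (p := 2) two_ne_zero
  rw [Lp.enorm_def]
  simpa using this

lemma norm_le_mul_of_enorm_sq_le {E F : Type*} [SeminormedAddCommGroup E]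
    [SeminormedAddCommGroup F] {x : E} {y : F} {c : ℝ} (hc : 0 ≤ c)
    (h : ‖x‖ₑ ^ 2 ≤ ENNReal.ofReal c ^ 2 * ‖y‖ₑ ^ 2) : ‖x‖ ≤ c * ‖y‖ := by
  rw [← mul_pow, ENNReal.pow_le_pow_left_iff two_ne_zero, ← ofReal_norm, ← ofReal_norm,
    ← ENNReal.ofReal_mul hc, ENNReal.ofReal_le_ofReal_iff (by positivity)] at h
  exact h

section Compression

variable {d : ℕ} {Q : Lp ℝ 2 (stationary d) →L[ℝ] Lp ℝ 2 (stationary d)}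
  {Ph : ℝ → (Lp ℝ 2 (stationary d) →L[ℝ] Lp ℝ 2 (stationary d))}

lemma coeFn_compression (hd : 2 ≤ d)
    (hQ : ∀ f : Lp ℝ 2 (stationary d), (Q f : ℝ → ℝ) =ᵐ[stationary d]
      fun a => ∫ y, (f : ℝ → ℝ) (a / d + Real.sqrt (1 - 1 / (d : ℝ) ^ 2) * y) ∂stationary d)
    (hPh : ∀ (h : ℝ) (f : Lp ℝ 2 (stationary d)), (Ph h f : ℝ → ℝ) =ᵐ[stationary d]
      fun a => if h ≤ a then (f : ℝ → ℝ) a else 0) (h : ℝ) (f : Lp ℝ 2 (stationary d)) :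
    ((Ph h ∘L ((d : ℝ) • Q) ∘L Ph h) f : ℝ → ℝ) =ᵐ[stationary d]
      (Set.Ici h).indicator fun a => d * ∫ y in Set.Ici h, f y ∂transition d a := by
  have hi : ∀ a, ∫ y, (Ph h f : ℝ → ℝ) (a / d + Real.sqrt (1 - 1 / (d : ℝ) ^ 2) * y)
      ∂stationary d = ∫ y in Set.Ici h, f y ∂transition d a := by
    intro a
    rw [← integral_map (φ := fun y => a / d + Real.sqrt (1 - 1 / (d : ℝ) ^ 2) * y)
      (by fun_prop) (Lp.stronglyMeasurable _).aestronglyMeasurable, map_stationary hd,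
      ← integral_indicator measurableSet_Ici]
    refine integral_congr_ae ?_
    filter_upwards [(transition_absolutelyContinuous hd a).ae_eq (hPh h f)] with y hy
    rw [hy]
    simp [Set.indicator]
  filter_upwards [hPh h (((d : ℝ) • Q) (Ph h f)), hQ (Ph h f),
    Lp.coeFn_smul (d : ℝ) (Q (Ph h f))] with a h1 h2 h3
  simp only [ContinuousLinearMap.comp_apply]
  rw [h1]
  simp only [_root_.smul_apply]
  rw [h3, Pi.smul_apply, h2, hi]
  simp [Set.indicator]

lemma enorm_compression_sq (hd : 2 ≤ d)
    (hQ : ∀ f : Lp ℝ 2 (stationary d), (Q f : ℝ → ℝ) =ᵐ[stationary d]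
      fun a => ∫ y, (f : ℝ → ℝ) (a / d + Real.sqrt (1 - 1 / (d : ℝ) ^ 2) * y) ∂stationary d)
    (hPh : ∀ (h : ℝ) (f : Lp ℝ 2 (stationary d)), (Ph h f : ℝ → ℝ) =ᵐ[stationary d]
      fun a => if h ≤ a then (f : ℝ → ℝ) a else 0) (h : ℝ) (f : Lp ℝ 2 (stationary d)) :
    ‖(Ph h ∘L ((d : ℝ) • Q) ∘L Ph h) f‖ₑ ^ 2 =
      ∫⁻ a in Set.Ici h, (d * ‖∫ y in Set.Ici h, f y ∂transition d a‖ₑ) ^ 2 ∂stationary d := by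
  rw [enorm_sq_Lp, ← lintegral_indicator measurableSet_Ici]
  refine lintegral_congr_ae ?_
  filter_upwards [coeFn_compression hd hQ hPh h f] with a ha
  rw [ha]
  by_cases h' : h ≤ a
  · simp [Set.indicator, h', enorm_mul]
  · simp [Set.indicator, h']

lemma measurable_enorm_Lp (f : Lp ℝ 2 (stationary d)) : Measurable fun x => ‖f x‖ₑ :=
  (Lp.stronglyMeasurable f).enorm

theorem norm_compression_zero_lt (hd : 2 ≤ d)
    (hQ : ∀ f : Lp ℝ 2 (stationary d), (Q f : ℝ → ℝ) =ᵐ[stationary d]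
      fun a => ∫ y, (f : ℝ → ℝ) (a / d + Real.sqrt (1 - 1 / (d : ℝ) ^ 2) * y) ∂stationary d)
    (hPh : ∀ (h : ℝ) (f : Lp ℝ 2 (stationary d)), (Ph h f : ℝ → ℝ) =ᵐ[stationary d]
      fun a => if h ≤ a then (f : ℝ → ℝ) a else 0) :
    ‖Ph 0 ∘L ((d : ℝ) • Q) ∘L Ph 0‖ < d := by
  obtain ⟨w, c, hw, hw0, hwt, hc0, hc1, hc⟩ := exists_lyapunov_weight hd
  have h0 : (0 : ℝ) < d := by positivity
  refine lt_of_le_of_lt (b := d * c) ?_ (by nlinarith)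
  refine ContinuousLinearMap.opNorm_le_bound _ (by positivity) fun f => ?_
  refine norm_le_mul_of_enorm_sq_le (by positivity) ?_
  have hF := measurable_enorm_Lp f
  have hT : Measurable fun a => ∫⁻ y in Set.Ici 0, ‖f y‖ₑ ∂transition d a := by
    simp_rw [← lintegral_indicator measurableSet_Ici]
    exact measurable_lintegral_transition d (hF.indicator measurableSet_Ici)
  rw [enorm_compression_sq hd hQ hPh]
  calc _ ≤ ∫⁻ a in Set.Ici 0, (d : ℝ≥0∞) ^ 2 *
          (∫⁻ y in Set.Ici 0, ‖f y‖ₑ ∂transition d a) ^ 2 ∂stationary d := by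
        refine lintegral_mono fun a => ?_
        rw [mul_pow]
        gcongr
        exact enorm_integral_le_lintegral_enorm _
    _ ≤ (d : ℝ≥0∞) ^ 2 * (ENNReal.ofReal c ^ 2 * ∫⁻ a in Set.Ici 0, ‖f a‖ₑ ^ 2
          ∂stationary d) := by
        rw [lintegral_const_mul _ (hT.pow_const 2)]
        gcongr
        exact schur_test hd measurableSet_Ici hw hw0 hwt hc hF
    _ ≤ ENNReal.ofReal (d * c) ^ 2 * ‖f‖ₑ ^ 2 := by
        rw [ENNReal.ofReal_mul h0.le, ENNReal.ofReal_natCast, mul_pow, mul_assoc, enorm_sq_Lp]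
        gcongr
        exact Measure.restrict_le_self

theorem tail_lt_norm_compression (hd : 2 ≤ d)
    (hQ : ∀ f : Lp ℝ 2 (stationary d), (Q f : ℝ → ℝ) =ᵐ[stationary d]
      fun a => ∫ y, (f : ℝ → ℝ) (a / d + Real.sqrt (1 - 1 / (d : ℝ) ^ 2) * y) ∂stationary d)
    (hPh : ∀ (h : ℝ) (f : Lp ℝ 2 (stationary d)), (Ph h f : ℝ → ℝ) =ᵐ[stationary d]
      fun a => if h ≤ a then (f : ℝ → ℝ) a else 0) (h : ℝ) :
    d * (gaussianReal 0 1).real (Set.Ici (h * ((d : ℝ) - 1) / Real.sqrt d)) <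
      ‖Ph h ∘L ((d : ℝ) • Q) ∘L Ph h‖ := by
  have h0 : (0 : ℝ) < d := by positivity
  by_contra! hle
  set A := Ph h ∘L ((d : ℝ) • Q) ∘L Ph h with hA
  set f : Lp ℝ 2 (stationary d) :=
    indicatorConstLp 2 (measurableSet_Ici (a := h)) (measure_ne_top _ _) 1 with hf
  have hfc : (f : ℝ → ℝ) =ᵐ[stationary d] (Set.Ici h).indicator fun _ => 1 :=
    indicatorConstLp_coeFn
  have hint : ∀ a, ∫ y in Set.Ici h, f y ∂transition d a = (transition d a).real (Set.Ici h) := by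
    intro a
    have : ∫ y in Set.Ici h, f y ∂transition d a = ∫ y in Set.Ici h, 1 ∂transition d a := by
      refine setIntegral_congr_ae measurableSet_Ici ?_
      filter_upwards [(transition_absolutelyContinuous hd a).ae_eq hfc] with y hy hm
      rw [hy]
      simp [hm]
    rw [this]
    simp
  have hne : stationary d (Set.Ici h) ≠ 0 := fun h' => by
    have := gaussianReal_absolutelyContinuous' _ (stationary_var_ne_zero hd) h'
    simp at this
  have hnormf : ‖f‖ₑ ^ 2 = stationary d (Set.Ici h) := by
    rw [enorm_sq_Lp, ← setLIntegral_one, ← lintegral_indicator measurableSet_Ici]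
    refine lintegral_congr_ae ?_
    filter_upwards [hfc] with y hy
    rw [hy]
    by_cases hm : h ≤ y <;> simp [Set.indicator, hm]
  have hAf : ‖A f‖ₑ ^ 2 =
      ∫⁻ a in Set.Ici h, (d * transition d a (Set.Ici h)) ^ 2 ∂stationary d := by
    rw [enorm_compression_sq hd hQ hPh]
    refine lintegral_congr fun a => ?_
    rw [hint, Real.enorm_of_nonneg measureReal_nonneg, ofReal_measureReal]
  have hlt : ∫⁻ a in Set.Ici h, (d * transition d h (Set.Ici h)) ^ 2 ∂stationary d <
      ∫⁻ a in Set.Ici h, (d * transition d a (Set.Ici h)) ^ 2 ∂stationary d := by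
    refine setLIntegral_strict_mono measurableSet_Ici hne ?_ ?_ ?_
    · exact ((((Measure.measurable_coe measurableSet_Ici).comp
        (measurable_transition d)).const_mul _).pow_const 2)
    · rw [setLIntegral_const]
      exact ENNReal.mul_ne_top (ENNReal.pow_ne_top (ENNReal.mul_ne_top (ENNReal.natCast_ne_top d)
        (measure_ne_top _ _))) (measure_ne_top _ _)
    · have : ∀ᵐ a ∂stationary d, a ≠ h := by
        have hz := gaussianReal_absolutelyContinuous 0 (stationary_var_ne_zero hd)
          (Real.volume_singleton (a := h))
        exact measure_eq_zero_iff_ae_notMem.1 hz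
      filter_upwards [this] with a ha hm
      have := transition_Ici_strictMono hd h (lt_of_le_of_ne hm (Ne.symm ha))
      refine ENNReal.pow_lt_pow_left two_ne_zero ?_
      exact ENNReal.mul_lt_mul_right (by positivity) (ENNReal.natCast_ne_top d) this
  rw [← hAf, setLIntegral_const] at hlt
  refine absurd hlt (not_lt.2 ?_)
  rw [← hnormf, ← mul_pow]
  gcongr
  calc ‖A f‖ₑ ≤ ‖A‖ₑ * ‖f‖ₑ := A.le_opENorm f
    _ ≤ _ := by
      gcongr
      rw [transition_Ici_self hd, ← ofReal_measureReal, ← ENNReal.ofReal_natCast,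
        ← ENNReal.ofReal_mul h0.le, ← ofReal_norm]
      exact ENNReal.ofReal_le_ofReal hle

/-- The square root of the density of the stationary law shifted by `h` with respect to
the stationary law. -/
noncomputable def shiftWeight (d : ℕ) (h a : ℝ) : ℝ :=
  Real.exp (-((2 * h * a + h ^ 2) * ((d : ℝ) ^ 2 - 1)) / (4 * d))

lemma shiftWeight_nonneg (d : ℕ) (h a : ℝ) : 0 ≤ shiftWeight d h a := Real.exp_nonneg _

lemma measurable_shiftWeight (d : ℕ) (h : ℝ) : Measurable (shiftWeight d h) := by
  unfold shiftWeight; fun_prop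

lemma gaussianPDFReal_add_shift (hd : 2 ≤ d) (h a : ℝ) :
    gaussianPDFReal 0 (Real.toNNReal ((d : ℝ) / ((d : ℝ) ^ 2 - 1))) (a + h) =
      gaussianPDFReal 0 (Real.toNNReal ((d : ℝ) / ((d : ℝ) ^ 2 - 1))) a *
        shiftWeight d h a ^ 2 := by
  have h2 : (2 : ℝ) ≤ d := by exact_mod_cast hd
  have h4 : (d : ℝ) ^ 2 - 1 ≠ 0 := by nlinarith
  simp only [gaussianPDFReal, Real.coe_toNNReal _ (stationary_var_pos hd).le, shiftWeight]
  rw [mul_assoc (√_)⁻¹, ← Real.exp_nat_mul, ← Real.exp_add]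
  congr 2
  field_simp
  push_cast
  ring

lemma shiftWeight_mul_gaussianPDFReal_le (hd : 2 ≤ d) {h a y : ℝ} (hh : 0 ≤ h) (ha : 0 ≤ a)
    (hy : 0 ≤ y) :
    shiftWeight d h a * gaussianPDFReal ((a + h) / d) (d : ℝ≥0)⁻¹ (y + h) ≤
      Real.exp (-(h ^ 2 * ((d : ℝ) - 1) ^ 2) / (2 * d)) *
        (gaussianPDFReal (a / d) (d : ℝ≥0)⁻¹ y * shiftWeight d h y) := by
  have h2 : (2 : ℝ) ≤ d := by exact_mod_cast hd
  simp only [gaussianPDFReal, NNReal.coe_inv, NNReal.coe_natCast, shiftWeight]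
  rw [mul_left_comm, mul_assoc _ (Real.exp _) (Real.exp _), mul_left_comm (Real.exp _) _ (_ * _),
    ← Real.exp_add, ← Real.exp_add, ← Real.exp_add]
  gcongr ?_ * Real.exp ?_
  rw [← sub_nonneg]
  have : 0 ≤ h * (a + y) * ((d : ℝ) - 1) ^ 2 / (2 * d) := by positivity
  refine this.trans (le_of_eq ?_)
  field_simp
  ring

lemma setLIntegral_stationary_Ici (hd : 2 ≤ d) {u : ℝ → ℝ≥0∞} (hu : Measurable u) (h : ℝ) :
    ∫⁻ a in Set.Ici h, u a ∂stationary d =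
      ∫⁻ a in Set.Ici 0, ENNReal.ofReal (shiftWeight d h a) ^ 2 * u (a + h) ∂stationary d := by
  rw [setLIntegral_gaussianReal_Ici (stationary_var_ne_zero hd) hu,
    setLIntegral_gaussianReal_Ici (stationary_var_ne_zero hd)]
  · refine lintegral_congr fun a => ?_
    rw [add_zero, gaussianPDF, gaussianPDFReal_add_shift hd,
      ENNReal.ofReal_mul (gaussianPDFReal_nonneg _ _ _), ENNReal.ofReal_pow (shiftWeight_nonneg _ _ _),
      mul_assoc]
    rfl
  · exact ((measurable_shiftWeight d h).ennreal_ofReal.pow_const 2).mul (hu.comp (by fun_prop))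

lemma shiftWeight_mul_setLIntegral_transition_le (hd : 2 ≤ d) {u : ℝ → ℝ≥0∞}
    (hu : Measurable u) {h a : ℝ} (hh : 0 ≤ h) (ha : 0 ≤ a) :
    ENNReal.ofReal (shiftWeight d h a) * ∫⁻ y in Set.Ici h, u y ∂transition d (a + h) ≤
      ENNReal.ofReal (Real.exp (-(h ^ 2 * ((d : ℝ) - 1) ^ 2) / (2 * d))) *
        ∫⁻ y in Set.Ici 0, ENNReal.ofReal (shiftWeight d h y) * u (y + h) ∂transition d a := by
  have hm : Measurable fun y => ENNReal.ofReal (shiftWeight d h y) * u (y + h) :=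
    (measurable_shiftWeight d h).ennreal_ofReal.mul (hu.comp (by fun_prop))
  rw [transition, transition, setLIntegral_gaussianReal_Ici (transition_var_ne_zero hd) hu,
    setLIntegral_gaussianReal_Ici (transition_var_ne_zero hd) hm, ← lintegral_const_mul',
    ← lintegral_const_mul']
  · refine setLIntegral_mono' measurableSet_Ici fun y hy => ?_
    have key := ENNReal.ofReal_le_ofReal (shiftWeight_mul_gaussianPDFReal_le hd hh ha hy)
    rw [ENNReal.ofReal_mul (shiftWeight_nonneg _ _ _), ENNReal.ofReal_mul (Real.exp_nonneg _),
      ENNReal.ofReal_mul (gaussianPDFReal_nonneg _ _ _)] at key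
    simp only [add_zero, gaussianPDF]
    rw [← mul_assoc, ← mul_assoc, ← mul_assoc]
    refine mul_le_mul_left (key.trans (le_of_eq ?_)) (u (y + h))
    ring
  · exact ENNReal.ofReal_ne_top
  · exact ENNReal.ofReal_ne_top

theorem norm_compression_le (hd : 2 ≤ d)
    (hQ : ∀ f : Lp ℝ 2 (stationary d), (Q f : ℝ → ℝ) =ᵐ[stationary d]
      fun a => ∫ y, (f : ℝ → ℝ) (a / d + Real.sqrt (1 - 1 / (d : ℝ) ^ 2) * y) ∂stationary d)
    (hPh : ∀ (h : ℝ) (f : Lp ℝ 2 (stationary d)), (Ph h f : ℝ → ℝ) =ᵐ[stationary d]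
      fun a => if h ≤ a then (f : ℝ → ℝ) a else 0) {h : ℝ} (hh : 0 ≤ h) :
    ‖Ph h ∘L ((d : ℝ) • Q) ∘L Ph h‖ ≤
      ‖Ph 0 ∘L ((d : ℝ) • Q) ∘L Ph 0‖ *
        Real.exp (-(h ^ 2 * ((d : ℝ) - 1) ^ 2) / (2 * d)) := by
  set A := Ph 0 ∘L ((d : ℝ) • Q) ∘L Ph 0 with hA
  set e := Real.exp (-(h ^ 2 * ((d : ℝ) - 1) ^ 2) / (2 * d)) with he
  refine ContinuousLinearMap.opNorm_le_bound _ (by positivity) fun f => ?_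
  refine norm_le_mul_of_enorm_sq_le (by positivity) ?_
  have hF := measurable_enorm_Lp f
  set g₀ : ℝ → ℝ := (Set.Ici 0).indicator fun a => shiftWeight d h a * ‖f (a + h)‖ with hg₀
  have hg₀m : Measurable g₀ := ((measurable_shiftWeight d h).mul
    ((Lp.stronglyMeasurable f).norm.measurable.comp (by fun_prop))).indicator measurableSet_Ici
  have hg₀e : ∀ a ∈ Set.Ici (0 : ℝ),
      ‖g₀ a‖ₑ = ENNReal.ofReal (shiftWeight d h a) * ‖f (a + h)‖ₑ := by
    intro a ha
    rw [hg₀, Set.indicator_of_mem ha, enorm_mul, enorm_norm,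
      Real.enorm_of_nonneg (shiftWeight_nonneg _ _ _)]
  have hg₀sq : ∫⁻ a, ‖g₀ a‖ₑ ^ 2 ∂stationary d ≤ ‖f‖ₑ ^ 2 := by
    calc ∫⁻ a, ‖g₀ a‖ₑ ^ 2 ∂stationary d
        = ∫⁻ a in Set.Ici 0, ENNReal.ofReal (shiftWeight d h a) ^ 2 * ‖f (a + h)‖ₑ ^ 2
            ∂stationary d := by
          rw [← lintegral_indicator measurableSet_Ici]
          refine lintegral_congr fun a => ?_
          by_cases ha : a ∈ Set.Ici (0 : ℝ)
          · rw [hg₀e a ha, Set.indicator_of_mem ha, mul_pow]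
          · simp only [hg₀, Set.indicator_of_notMem ha]
            simp
      _ = ∫⁻ a in Set.Ici h, ‖f a‖ₑ ^ 2 ∂stationary d :=
          (setLIntegral_stationary_Ici hd (hF.pow_const 2) h).symm
      _ ≤ ‖f‖ₑ ^ 2 := by
          rw [enorm_sq_Lp]
          exact setLIntegral_le_lintegral _ _
  have hg₀L : MemLp g₀ 2 (stationary d) := by
    refine ⟨hg₀m.aestronglyMeasurable, ?_⟩
    have h1 := eLpNorm_nnreal_pow_eq_lintegral (f := g₀) (μ := stationary d) (p := 2) two_ne_zero
    have h2 : eLpNorm g₀ 2 (stationary d) ^ 2 < ∞ := by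
      refine lt_of_le_of_lt (le_of_eq_of_le ?_ hg₀sq) (ENNReal.pow_lt_top enorm_lt_top)
      simpa using h1
    exact (ENNReal.pow_lt_top_iff.1 h2).resolve_right two_ne_zero
  set g : Lp ℝ 2 (stationary d) := hg₀L.toLp g₀ with hg
  have hgc : (g : ℝ → ℝ) =ᵐ[stationary d] g₀ := hg₀L.coeFn_toLp
  have hgn : ‖g‖ₑ ^ 2 ≤ ‖f‖ₑ ^ 2 := by
    rw [enorm_sq_Lp]
    refine le_of_eq_of_le (lintegral_congr_ae ?_) hg₀sq
    filter_upwards [hgc] with a ha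
    rw [ha]
  have hT : ∀ {h' : ℝ} {u : ℝ → ℝ≥0∞}, Measurable u →
      Measurable fun a => ∫⁻ y in Set.Ici h', u y ∂transition d a := fun {h' u} hu => by
    simp_rw [← lintegral_indicator measurableSet_Ici]
    exact measurable_lintegral_transition d (hu.indicator measurableSet_Ici)
  have hfin : ∀ᵐ a ∂(stationary d).restrict (Set.Ici 0),
      ∫⁻ y in Set.Ici 0, ‖g₀ y‖ₑ ∂transition d a < ∞ := by
    have h1 := schur_test hd (S := Set.Ici 0) (w := 1) (c := 1) measurableSet_Ici
      measurable_const (by simp) (by simp)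
      (fun a _ => by simpa using prob_le_one) hg₀m.enorm
    have h2 : ∀ᵐ a ∂(stationary d).restrict (Set.Ici 0),
        (∫⁻ y in Set.Ici 0, ‖g₀ y‖ₑ ∂transition d a) ^ 2 < ∞ := by
      refine ae_lt_top ((hT hg₀m.enorm).pow_const 2) (ne_of_lt ?_)
      refine h1.trans_lt (lt_of_le_of_lt ?_ (ENNReal.pow_lt_top (n := 2) (enorm_lt_top (x := f))))
      rw [one_pow, one_mul]
      exact (setLIntegral_le_lintegral _ _).trans hg₀sq
    filter_upwards [h2] with a ha
    exact (ENNReal.pow_lt_top_iff.1 ha).resolve_right two_ne_zero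
  have hAg : ∀ᵐ a ∂(stationary d).restrict (Set.Ici 0),
      ‖∫ y in Set.Ici 0, g y ∂transition d a‖ₑ =
        ∫⁻ y in Set.Ici 0, ‖g₀ y‖ₑ ∂transition d a := by
    filter_upwards [hfin] with a ha
    have h1 : ∫ y in Set.Ici 0, g y ∂transition d a =
        ∫ y in Set.Ici 0, ‖g₀ y‖ ∂transition d a := by
      refine setIntegral_congr_ae measurableSet_Ici ?_
      filter_upwards [(transition_absolutelyContinuous hd a).ae_eq hgc] with y hy _
      rw [hy, Real.norm_of_nonneg]
      exact Set.indicator_nonneg (fun x _ => mul_nonneg (shiftWeight_nonneg _ _ _) (norm_nonneg _)) _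
    rw [h1, Real.enorm_of_nonneg (integral_nonneg fun _ => norm_nonneg _),
      ofReal_integral_norm_eq_lintegral_enorm ⟨hg₀m.aestronglyMeasurable, ha⟩]
  calc ‖(Ph h ∘L ((d : ℝ) • Q) ∘L Ph h) f‖ₑ ^ 2
      ≤ ∫⁻ a in Set.Ici h, (d * ∫⁻ y in Set.Ici h, ‖f y‖ₑ ∂transition d a) ^ 2
          ∂stationary d := by
        rw [enorm_compression_sq hd hQ hPh]
        refine lintegral_mono fun a => ?_
        gcongr
        exact enorm_integral_le_lintegral_enorm _
    _ = ∫⁻ a in Set.Ici 0, ENNReal.ofReal (shiftWeight d h a) ^ 2 *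
          (d * ∫⁻ y in Set.Ici h, ‖f y‖ₑ ∂transition d (a + h)) ^ 2 ∂stationary d :=
        setLIntegral_stationary_Ici hd (((hT hF).const_mul _).pow_const 2) h
    _ ≤ ∫⁻ a in Set.Ici 0, ENNReal.ofReal e ^ 2 *
          (d * ∫⁻ y in Set.Ici 0, ‖g₀ y‖ₑ ∂transition d a) ^ 2 ∂stationary d := by
        refine setLIntegral_mono' measurableSet_Ici fun a ha => ?_
        rw [← mul_pow, ← mul_pow, mul_left_comm, mul_left_comm (ENNReal.ofReal e),
          setLIntegral_congr_fun measurableSet_Ici hg₀e]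
        gcongr (d * ?_) ^ 2
        exact shiftWeight_mul_setLIntegral_transition_le hd hF hh ha
    _ = ENNReal.ofReal e ^ 2 * ‖A g‖ₑ ^ 2 := by
        rw [lintegral_const_mul _ (((hT hg₀m.enorm).const_mul _).pow_const 2), hA,
          enorm_compression_sq hd hQ hPh]
        congr 1
        refine lintegral_congr_ae ?_
        filter_upwards [hAg] with a ha
        rw [ha]
    _ ≤ ENNReal.ofReal e ^ 2 * (‖A‖ₑ ^ 2 * ‖f‖ₑ ^ 2) := by
        gcongr
        calc ‖A g‖ₑ ^ 2 ≤ (‖A‖ₑ * ‖g‖ₑ) ^ 2 := by gcongr; exact A.le_opENorm g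
          _ = ‖A‖ₑ ^ 2 * ‖g‖ₑ ^ 2 := mul_pow _ _ _
          _ ≤ _ := by gcongr
    _ = ENNReal.ofReal (‖A‖ * e) ^ 2 * ‖f‖ₑ ^ 2 := by
        rw [ENNReal.ofReal_mul (norm_nonneg _), ofReal_norm]
        ring

end Compression

end OrnsteinUhlenbeck

/-- For d ≥ 2, with h_* the critical level for level-set percolation
of the Gaussian free field on the (d+1)-regular tree (λ_{h_*} = 1), u_* the
critical level for vacant-set percolation of random interlacements
(d·exp(-u_*(d-1)²/d) = 1), and h_Δ, h_□ defined by d·Φ̄(h_Δ(d-1)/√d) = 1 and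
λ_0·exp(-h_□²(d-1)²/(2d)) = 1, one has 0 ≤ h_Δ < h_* ≤ h_□ < √(2u_*); in
particular 0 < h_* < √(2u_*). -/
theorem stmt_19 (d : ℕ) (hd : 2 ≤ d)
    (ν : Measure ℝ) (hν : ν = gaussianReal 0 (Real.toNNReal ((d : ℝ) / ((d : ℝ) ^ 2 - 1))))
    (Q : Lp ℝ 2 ν →L[ℝ] Lp ℝ 2 ν)
    (hQ : ∀ f : Lp ℝ 2 ν, (Q f : ℝ → ℝ) =ᵐ[ν]
      fun a => ∫ y, (f : ℝ → ℝ) (a / d + Real.sqrt (1 - 1 / (d : ℝ) ^ 2) * y) ∂ν)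
    (Ph : ℝ → (Lp ℝ 2 ν →L[ℝ] Lp ℝ 2 ν))
    (hPh : ∀ (h : ℝ) (f : Lp ℝ 2 ν), (Ph h f : ℝ → ℝ) =ᵐ[ν]
      fun a => if h ≤ a then (f : ℝ → ℝ) a else 0)
    (lam : ℝ → ℝ) (hlam : ∀ h : ℝ, lam h = ‖Ph h ∘L ((d : ℝ) • Q) ∘L Ph h‖)
    (Phibar : ℝ → ℝ)
    (hPhibar : ∀ a : ℝ, Phibar a =
      (Real.sqrt (2 * Real.pi))⁻¹ * ∫ t in Set.Ioi a, Real.exp (-t ^ 2 / 2))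
    (hstar : ℝ) (hstar_eq : lam hstar = 1)
    (hΔ : ℝ) (hΔ_eq : (d : ℝ) * Phibar (hΔ * ((d : ℝ) - 1) / Real.sqrt d) = 1)
    (hbox : ℝ) (hbox_nn : 0 ≤ hbox)
    (hbox_eq : lam 0 * Real.exp (-(hbox ^ 2 * ((d : ℝ) - 1) ^ 2) / (2 * d)) = 1)
    (ustar : ℝ) (hustar : (d : ℝ) * Real.exp (-(ustar * ((d : ℝ) - 1) ^ 2) / d) = 1) :
    0 ≤ hΔ ∧ hΔ < hstar ∧ hstar ≤ hbox ∧ hbox < Real.sqrt (2 * ustar) ∧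
      0 < hstar ∧ hstar < Real.sqrt (2 * ustar) := by
  have h2 : (2 : ℝ) ≤ d := by exact_mod_cast hd
  have h0 : (0 : ℝ) < d := by positivity
  have hs : 0 < Real.sqrt d := Real.sqrt_pos.2 h0
  have hk : 0 < ((d : ℝ) - 1) ^ 2 := by nlinarith
  subst hν
  have htail : ∀ t, Phibar t = (gaussianReal 0 1).real (Set.Ici t) := fun t => by
    rw [hPhibar, OrnsteinUhlenbeck.real_gaussianReal_Ici]
  have hanti : StrictAnti Phibar := fun s t hst => by
    rw [htail, htail]
    exact ENNReal.toReal_strict_mono (measure_ne_top _ _)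
      (OrnsteinUhlenbeck.gaussianReal_Ici_strictAnti 0 one_ne_zero hst)
  have hzero : Phibar 0 = 1 / 2 := by
    have hI := integral_gaussian_Ioi (1 / 2)
    have hE : ∀ t : ℝ, -t ^ 2 / 2 = -(1 / 2) * t ^ 2 := fun t => by ring
    have hpi : 0 < Real.sqrt (2 * Real.pi) := Real.sqrt_pos.2 (by positivity)
    simp_rw [hPhibar, hE]
    rw [hI, div_div_eq_mul_div, div_one, mul_comm Real.pi 2]
    field_simp
  have hlow := OrnsteinUhlenbeck.tail_lt_norm_compression hd hQ hPh hstar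
  rw [← hlam, hstar_eq.trans hΔ_eq.symm, ← htail, mul_lt_mul_iff_right₀ h0, hanti.lt_iff_gt,
    div_lt_div_iff_of_pos_right hs, mul_lt_mul_iff_left₀ (by linarith)] at hlow
  have hΔ_nn : 0 ≤ hΔ := by
    by_contra! hneg
    have : Phibar 0 < Phibar (hΔ * ((d : ℝ) - 1) / Real.sqrt d) :=
      hanti (div_neg_of_neg_of_pos (mul_neg_of_neg_of_pos hneg (by linarith)) hs)
    rw [hzero] at this
    nlinarith
  have hstar_pos : 0 < hstar := hΔ_nn.trans_lt hlow
  have hlam0 : 0 < lam 0 := by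
    by_contra! hneg
    have := mul_nonpos_of_nonpos_of_nonneg hneg
      (Real.exp_nonneg (-(hbox ^ 2 * ((d : ℝ) - 1) ^ 2) / (2 * d)))
    linarith
  have hup := OrnsteinUhlenbeck.norm_compression_le hd hQ hPh hstar_pos.le
  rw [← hlam, ← hlam, hstar_eq.trans hbox_eq.symm, mul_le_mul_iff_right₀ hlam0, Real.exp_le_exp,
    div_le_div_iff_of_pos_right (by positivity), neg_le_neg_iff, mul_le_mul_iff_left₀ hk] at hup
  have hstar_le : hstar ≤ hbox := (sq_le_sq₀ hstar_pos.le hbox_nn).1 hup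
  have hlt := OrnsteinUhlenbeck.norm_compression_zero_lt hd hQ hPh
  rw [← hlam] at hlt
  have hbox_lt : hbox < Real.sqrt (2 * ustar) := by
    apply Real.lt_sqrt_of_sq_lt
    by_contra! hge
    have hexp : Real.exp (-(hbox ^ 2 * ((d : ℝ) - 1) ^ 2) / (2 * d)) ≤
        Real.exp (-(ustar * ((d : ℝ) - 1) ^ 2) / d) := by
      rw [Real.exp_le_exp, div_le_div_iff₀ (by positivity) h0]
      nlinarith [mul_le_mul_of_nonneg_right hge (mul_pos hk h0).le]
    have := mul_le_mul_of_nonneg_left hexp hlam0.le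
    have := mul_lt_mul_of_pos_right hlt (Real.exp_pos (-(ustar * ((d : ℝ) - 1) ^ 2) / d))
    linarith
  exact ⟨hΔ_nn, hlow, hstar_le, hbox_lt, hstar_pos, hstar_le.trans_lt hbox_lt⟩
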